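/- For a real number r and positive reals a, b, let M_r(a, b; 2/3) denote the weighted power mean with weights 2/3 and 1/3: M_r(a, b; 2/3) = ((2/3)·a^r + (1/3)·b^r)^(1/r) if r ≠ 0, and M_0(a, b; 2/3) = a^(2/3)·b^(1/3). Then for real numbers α, β, the double inequality M_α(1, cosh x; 2/3) < sinh(x)/x < M_β(1, cosh x; 2/3) holds for every x ∈ (0, ∞) if and only if α ≤ 0 and β ≥ 4/5. -/

import Mathlib

open Real Set

/-- The weighted power mean of `a` and `b` with weights `2/3` and `1/3`. -/
noncomputable def weightedPowerMean (r a b : ℝ) : ℝ :=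
  if r = 0 then a ^ ((2 : ℝ) / 3) * b ^ ((1 : ℝ) / 3)
  else (2 / 3 * a ^ r + 1 / 3 * b ^ r) ^ (1 / r)

/-!
Fix `r` and let `F x = sinh x / M_r (1, cosh x)`, so that comparing `sinh x / x` with
`M_r (1, cosh x)` means comparing `F x` with `x`. The derivative of `F` is a function `D` of
`c = cosh x` alone, with `D 1 = 1`, and `D'` is a positive multiple of
`N c = 2 - r c ^ r - (1 - r) c ^ (r - 2) - c ^ (2 r - 2)`. Two applications of the mean value
theorem show that `sinh x / x - M_r (1, cosh x)` has the sign of `N` at some point of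
`(1, cosh x)`.

On `(1, ∞)` the function `N` is positive for `r = 0` and negative for `r = 4 / 5`, and monotonicity
of `M_r` in `r` extends these two cases to `r ≤ 0` and `r ≥ 4 / 5`. Conversely `N 1 = 0` and
`N' 1 = 4 - 5 r`, so the upper bound fails near `0` for `r < 4 / 5`, while for `r > 0` the lower
bound fails at infinity, where `M_r (1, cosh x)` is at least a fixed multiple of `cosh x`.
-/

open Filter Topology

section PowerMean

variable {r s a b : ℝ}

lemma weightedPowerMean_zero (a b : ℝ) :
    weightedPowerMean 0 a b = a ^ ((2 : ℝ) / 3) * b ^ ((1 : ℝ) / 3) :=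
  if_pos rfl

lemma weightedPowerMean_of_ne_zero (hr : r ≠ 0) (a b : ℝ) :
    weightedPowerMean r a b = (2 / 3 * a ^ r + 1 / 3 * b ^ r) ^ (1 / r) :=
  if_neg hr

lemma weightedPowerMean_pos (r : ℝ) (ha : 0 < a) (hb : 0 < b) : 0 < weightedPowerMean r a b := by
  unfold weightedPowerMean
  split_ifs <;> positivity

lemma weightedPowerMean_one_one (r : ℝ) : weightedPowerMean r 1 1 = 1 := by
  unfold weightedPowerMean
  norm_num

lemma weightedPowerMean_neg (r : ℝ) (ha : 0 ≤ a) (hb : 0 ≤ b) :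
    weightedPowerMean (-r) a b = (weightedPowerMean r a⁻¹ b⁻¹)⁻¹ := by
  rcases eq_or_ne r 0 with rfl | hr
  · rw [neg_zero, weightedPowerMean_zero, weightedPowerMean_zero, inv_rpow ha, inv_rpow hb,
      ← mul_inv, inv_inv]
  · rw [weightedPowerMean_of_ne_zero (neg_ne_zero.mpr hr), weightedPowerMean_of_ne_zero hr,
      inv_rpow ha, inv_rpow hb, ← rpow_neg ha, ← rpow_neg hb,
      one_div_neg_eq_neg_one_div, rpow_neg (by positivity)]

lemma weightedPowerMean_zero_le (hr : 0 < r) (ha : 0 ≤ a) (hb : 0 ≤ b) :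
    weightedPowerMean 0 a b ≤ weightedPowerMean r a b := by
  rw [weightedPowerMean_zero, weightedPowerMean_of_ne_zero hr.ne', one_div r,
    le_rpow_inv_iff_of_pos (by positivity) (by positivity) hr]
  calc (a ^ ((2 : ℝ) / 3) * b ^ ((1 : ℝ) / 3)) ^ r
      = (a ^ r) ^ ((2 : ℝ) / 3) * (b ^ r) ^ ((1 : ℝ) / 3) := by
        rw [mul_rpow (by positivity) (by positivity), ← rpow_mul ha,
          ← rpow_mul hb, ← rpow_mul ha, ← rpow_mul hb, mul_comm r, mul_comm r]
    _ ≤ 2 / 3 * a ^ r + 1 / 3 * b ^ r :=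
        geom_mean_le_arith_mean2_weighted (by norm_num) (by norm_num) (by positivity)
          (by positivity) (by norm_num)

lemma weightedPowerMean_le_of_pos_of_le (hr : 0 < r) (hrs : r ≤ s) (ha : 0 ≤ a) (hb : 0 ≤ b) :
    weightedPowerMean r a b ≤ weightedPowerMean s a b := by
  have hs : 0 < s := hr.trans_le hrs
  have rpow_div (z : ℝ) (hz : 0 ≤ z) : (z ^ r) ^ (s / r) = z ^ s := by
    rw [← rpow_mul hz, mul_div_cancel₀ s hr.ne']
  have jensen : (2 / 3 * a ^ r + 1 / 3 * b ^ r) ^ (s / r)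
      ≤ 2 / 3 * (a ^ r) ^ (s / r) + 1 / 3 * (b ^ r) ^ (s / r) :=
    (convexOn_rpow ((one_le_div hr).mpr hrs)).2 (rpow_nonneg ha r) (rpow_nonneg hb r)
      (by norm_num) (by norm_num) (by norm_num)
  rw [weightedPowerMean_of_ne_zero hr.ne', weightedPowerMean_of_ne_zero hs.ne', one_div s,
    le_rpow_inv_iff_of_pos (by positivity) (by positivity) hs, ← rpow_mul (by positivity),
    one_div r,
    inv_mul_eq_div]
  rwa [rpow_div a ha, rpow_div b hb] at jensen

lemma weightedPowerMean_le_of_nonneg_of_le (hr : 0 ≤ r) (hrs : r ≤ s) (ha : 0 ≤ a) (hb : 0 ≤ b) :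
    weightedPowerMean r a b ≤ weightedPowerMean s a b := by
  rcases hr.eq_or_lt with rfl | hr
  · rcases hrs.eq_or_lt with rfl | hs
    · exact le_rfl
    · exact weightedPowerMean_zero_le hs ha hb
  · exact weightedPowerMean_le_of_pos_of_le hr hrs ha hb

lemma weightedPowerMean_le_of_nonpos_of_le (hs : s ≤ 0) (hrs : r ≤ s) (ha : 0 < a) (hb : 0 < b) :
    weightedPowerMean r a b ≤ weightedPowerMean s a b := by
  have ha' : 0 < a⁻¹ := inv_pos.mpr ha
  have hb' : 0 < b⁻¹ := inv_pos.mpr hb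
  rw [← neg_neg r, ← neg_neg s, weightedPowerMean_neg _ ha.le hb.le,
    weightedPowerMean_neg _ ha.le hb.le]
  exact inv_anti₀ (weightedPowerMean_pos _ ha' hb') (weightedPowerMean_le_of_nonneg_of_le
    (neg_nonneg.mpr hs) (neg_le_neg hrs) ha'.le hb'.le)

lemma monotone_weightedPowerMean (ha : 0 < a) (hb : 0 < b) :
    Monotone (fun r ↦ weightedPowerMean r a b) := by
  intro r s hrs
  rcases le_total 0 r with hr | hr
  · exact weightedPowerMean_le_of_nonneg_of_le hr hrs ha.le hb.le
  rcases le_total s 0 with hs | hs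
  · exact weightedPowerMean_le_of_nonpos_of_le hs hrs ha hb
  · exact (weightedPowerMean_le_of_nonpos_of_le le_rfl hr ha hb).trans
      (weightedPowerMean_le_of_nonneg_of_le le_rfl hs ha.le hb.le)

lemma rpow_inv_mul_le_weightedPowerMean (hr : 0 < r) (ha : 0 ≤ a) (hb : 0 ≤ b) :
    (1 / 3) ^ r⁻¹ * b ≤ weightedPowerMean r a b := by
  rw [weightedPowerMean_of_ne_zero hr.ne', one_div r,
    le_rpow_inv_iff_of_pos (by positivity) (by positivity) hr, mul_rpow (by positivity) hb,
    rpow_inv_rpow (by norm_num) hr.ne']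
  exact le_add_of_nonneg_left (by positivity)

lemma hasDerivAt_weightedPowerMean (r : ℝ) (ha : 0 < a) (hb : 0 < b) :
    HasDerivAt (weightedPowerMean r a)
      (weightedPowerMean r a b * b ^ (r - 1) / (2 * a ^ r + b ^ r)) b := by
  rcases eq_or_ne r 0 with rfl | hr
  · have hM : weightedPowerMean 0 a = fun b ↦ a ^ ((2 : ℝ) / 3) * b ^ ((1 : ℝ) / 3) :=
      funext (weightedPowerMean_zero a)
    rw [hM]
    refine ((hasDerivAt_rpow_const (Or.inl hb.ne')).const_mul _).congr_deriv ?_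
    rw [rpow_sub_one hb.ne', rpow_sub_one hb.ne', rpow_zero, rpow_zero]
    ring
  · have hM : weightedPowerMean r a = fun b ↦ (2 / 3 * a ^ r + 1 / 3 * b ^ r) ^ (1 / r) :=
      funext (weightedPowerMean_of_ne_zero hr a)
    have hS : 0 < 2 / 3 * a ^ r + 1 / 3 * b ^ r := by positivity
    rw [hM]
    refine ((((hasDerivAt_rpow_const (Or.inl hb.ne')).const_mul (1 / 3)).const_add
      (2 / 3 * a ^ r)).rpow_const (Or.inl hS.ne')).congr_deriv ?_
    rw [rpow_sub_one hS.ne']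
    field_simp

end PowerMean

section SinhComparison

variable {r c x : ℝ}

/-- The derivative of `sinh x / M_r (1, cosh x)` with respect to `x`, as a function of
`c = cosh x`. -/
noncomputable def sinhQuotientDeriv (r c : ℝ) : ℝ :=
  (2 * c + c ^ (r - 1)) / ((2 + c ^ r) * weightedPowerMean r 1 c)

/-- The factor carrying the sign of the derivative of `sinhQuotientDeriv r`, hence the sign of the
difference between `sinh x / x` and `M_r (1, cosh x)`. -/
noncomputable def signFactor (r c : ℝ) : ℝ :=
  2 - r * c ^ r - (1 - r) * c ^ (r - 2) - c ^ (2 * r - 2)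

lemma sinhQuotientDeriv_one (r : ℝ) : sinhQuotientDeriv r 1 = 1 := by
  simp only [sinhQuotientDeriv, weightedPowerMean_one_one, one_rpow]
  norm_num

lemma hasDerivAt_sinh_div_weightedPowerMean (r x : ℝ) :
    HasDerivAt (fun y ↦ sinh y / weightedPowerMean r 1 (cosh y))
      (sinhQuotientDeriv r (cosh x)) x := by
  have hc : 0 < cosh x := cosh_pos x
  have hM := weightedPowerMean_pos r one_pos hc
  refine ((hasDerivAt_sinh x).div
    ((hasDerivAt_weightedPowerMean r one_pos hc).comp x (hasDerivAt_cosh x)) hM.ne').congr_deriv ?_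
  simp only [sinhQuotientDeriv, Function.comp_apply, one_rpow, mul_one]
  rw [rpow_sub_one hc.ne']
  field_simp
  linear_combination cosh x ^ r * cosh_sq x

lemma hasDerivAt_sinhQuotientDeriv (r : ℝ) (hc : 0 < c) :
    HasDerivAt (sinhQuotientDeriv r)
      (2 / ((2 + c ^ r) ^ 2 * weightedPowerMean r 1 c) * signFactor r c) c := by
  have hM := weightedPowerMean_pos r one_pos hc
  have hnum : HasDerivAt (fun c : ℝ ↦ 2 * c + c ^ (r - 1)) (2 + (r - 1) * c ^ (r - 2)) c := by
    refine (((hasDerivAt_id c).const_mul 2).add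
      (hasDerivAt_rpow_const (Or.inl hc.ne'))).congr_deriv ?_
    ring_nf
  have hden : HasDerivAt (fun c ↦ (2 + c ^ r) * weightedPowerMean r 1 c)
      ((r + 1) * c ^ (r - 1) * weightedPowerMean r 1 c) c := by
    refine (((hasDerivAt_rpow_const (Or.inl hc.ne')).const_add 2).mul
      (hasDerivAt_weightedPowerMean r one_pos hc)).congr_deriv ?_
    rw [one_rpow, mul_one]
    field_simp
  refine (hnum.div hden (by positivity)).congr_deriv ?_
  have rpow_sub_two : c ^ (r - 2) = c ^ r / c ^ 2 := by exact_mod_cast rpow_sub_natCast hc.ne' r 2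
  have rpow_two_mul_sub_two : c ^ (2 * r - 2) = (c ^ r) ^ 2 / c ^ 2 := by
    rw [rpow_sub hc, mul_comm, rpow_mul hc.le, rpow_two, rpow_two]
  rw [signFactor, rpow_sub_two, rpow_two_mul_sub_two, rpow_sub_one hc.ne']
  field_simp
  ring

lemma exists_sinh_div_eq_weightedPowerMean_mul (r : ℝ) (hx : 0 < x) :
    ∃ c ∈ Ioo 1 (cosh x),
      sinh x / x = weightedPowerMean r 1 (cosh x) * sinhQuotientDeriv r c := by
  obtain ⟨y, ⟨hy₀, hyx⟩, hslope⟩ := exists_hasDerivAt_eq_slope _ _ hx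
    (fun y _ ↦ (hasDerivAt_sinh_div_weightedPowerMean r y).continuousAt.continuousWithinAt)
    (fun y _ ↦ hasDerivAt_sinh_div_weightedPowerMean r y)
  refine ⟨cosh y, ⟨one_lt_cosh.mpr hy₀.ne', cosh_strictMonoOn hy₀.le hx.le hyx⟩, ?_⟩
  have hM := weightedPowerMean_pos r one_pos (cosh_pos x)
  rw [hslope, sinh_zero, zero_div, sub_zero, sub_zero]
  field_simp

lemma exists_sinhQuotientDeriv_sub_one_eq (r : ℝ) (hc : 1 < c) :
    ∃ d ∈ Ioo 1 c, sinhQuotientDeriv r c - 1 =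
      (c - 1) * (2 / ((2 + d ^ r) ^ 2 * weightedPowerMean r 1 d) * signFactor r d) := by
  obtain ⟨d, hd, hslope⟩ := exists_hasDerivAt_eq_slope _ _ hc
    (fun d hd ↦ (hasDerivAt_sinhQuotientDeriv r
      (one_pos.trans_le hd.1)).continuousAt.continuousWithinAt)
    (fun d hd ↦ hasDerivAt_sinhQuotientDeriv r (one_pos.trans hd.1))
  refine ⟨d, hd, ?_⟩
  rw [hslope, sinhQuotientDeriv_one, mul_div_cancel₀ _ (sub_pos.mpr hc).ne']

lemma exists_sign_sinh_div_sub_weightedPowerMean (r : ℝ) (hx : 0 < x) :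
    ∃ c ∈ Ioo 1 (cosh x), SignType.sign (sinh x / x - weightedPowerMean r 1 (cosh x)) =
      SignType.sign (signFactor r c) := by
  obtain ⟨c, ⟨hc, hcx⟩, hquot⟩ := exists_sinh_div_eq_weightedPowerMean_mul r hx
  obtain ⟨d, ⟨hd, hdc⟩, hderiv⟩ := exists_sinhQuotientDeriv_sub_one_eq r hc
  refine ⟨d, ⟨hd, hdc.trans hcx⟩, ?_⟩
  have hd₀ : 0 < d := one_pos.trans hd
  have hMx := weightedPowerMean_pos r one_pos (cosh_pos x)
  have hMd := weightedPowerMean_pos r one_pos hd₀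
  have hfactor : 0 < 2 / ((2 + d ^ r) ^ 2 * weightedPowerMean r 1 d) := by positivity
  rw [hquot, ← mul_sub_one, hderiv, sign_mul, sign_mul, sign_mul, sign_pos hMx,
    sign_pos (sub_pos.mpr hc), sign_pos hfactor, one_mul, one_mul, one_mul]

lemma weightedPowerMean_lt_sinh_div (hx : 0 < x) (h : ∀ c ∈ Ioo 1 (cosh x), 0 < signFactor r c) :
    weightedPowerMean r 1 (cosh x) < sinh x / x := by
  obtain ⟨c, hc, hsign⟩ := exists_sign_sinh_div_sub_weightedPowerMean r hx
  rwa [sign_pos (h c hc), sign_eq_one_iff, sub_pos] at hsign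

lemma sinh_div_lt_weightedPowerMean (hx : 0 < x) (h : ∀ c ∈ Ioo 1 (cosh x), signFactor r c < 0) :
    sinh x / x < weightedPowerMean r 1 (cosh x) := by
  obtain ⟨c, hc, hsign⟩ := exists_sign_sinh_div_sub_weightedPowerMean r hx
  rwa [sign_neg (h c hc), sign_eq_neg_one_iff, sub_neg] at hsign

lemma signFactor_zero_pos (hc : 1 < c) : 0 < signFactor 0 c := by
  have h : c ^ (-2 : ℝ) < 1 := rpow_lt_one_of_one_lt_of_neg hc (by norm_num)
  have hN : signFactor 0 c = 2 * (1 - c ^ (-2 : ℝ)) := by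
    simp only [signFactor, zero_mul, mul_zero, sub_zero, zero_sub]
    ring
  rw [hN]
  exact mul_pos two_pos (sub_pos.mpr h)

lemma signFactor_four_fifths_neg (hc : 1 < c) : signFactor (4 / 5) c < 0 := by
  have hc₀ : 0 ≤ c := (one_pos.trans hc).le
  obtain ⟨w, hw, rfl⟩ : ∃ w : ℝ, 1 < w ∧ w ^ ((5 : ℝ) / 2) = c :=
    ⟨c ^ ((2 : ℝ) / 5), one_lt_rpow hc (by norm_num), by rw [← rpow_mul hc₀]; norm_num⟩
  have hw₀ : 0 < w := one_pos.trans hw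
  have hfactor : signFactor (4 / 5) (w ^ ((5 : ℝ) / 2)) =
      -((w - 1) ^ 2 * (4 * w ^ 3 + 8 * w ^ 2 + 2 * w + 1) / (5 * w ^ 3)) := by
    have rpow_four_fifths : (w ^ ((5 : ℝ) / 2)) ^ ((4 : ℝ) / 5) = w ^ 2 := by
      rw [← rpow_mul hw₀.le, ← rpow_natCast]; norm_num
    have rpow_neg_six_fifths : (w ^ ((5 : ℝ) / 2)) ^ ((4 : ℝ) / 5 - 2) = (w ^ 3)⁻¹ := by
      rw [← rpow_mul hw₀.le, ← rpow_natCast, ← rpow_neg hw₀.le]; norm_num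
    have rpow_neg_two_fifths : (w ^ ((5 : ℝ) / 2)) ^ (2 * ((4 : ℝ) / 5) - 2) = w⁻¹ := by
      rw [← rpow_mul hw₀.le, ← rpow_neg_one]; norm_num
    rw [signFactor, rpow_four_fifths, rpow_neg_six_fifths, rpow_neg_two_fifths]
    field_simp
    ring
  have hsq : 0 < (w - 1) ^ 2 := pow_pos (sub_pos.mpr hw) 2
  rw [hfactor, neg_lt_zero]
  exact div_pos (mul_pos hsq (by positivity)) (by positivity)

lemma hasDerivAt_signFactor_one (r : ℝ) : HasDerivAt (signFactor r) (4 - 5 * r) 1 := by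
  have hpow (p : ℝ) : HasDerivAt (fun c : ℝ ↦ c ^ p) p 1 := by
    simpa only [one_rpow, mul_one] using hasDerivAt_rpow_const (p := p) (Or.inl one_ne_zero)
  refine (((((hpow r).const_mul r).const_sub 2).sub ((hpow (r - 2)).const_mul (1 - r))).sub
    (hpow (2 * r - 2))).congr_deriv ?_
  ring

lemma eventually_signFactor_pos (hr : r < 4 / 5) : ∀ᶠ c in 𝓝[>] 1, 0 < signFactor r c := by
  have hderiv : 0 < deriv (signFactor r) 1 := by
    rw [(hasDerivAt_signFactor_one r).deriv]
    linarith
  have hone : signFactor r 1 = 0 := by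
    simp only [signFactor, one_rpow]
    ring
  filter_upwards [nhdsWithin_le_nhds (eventually_nhdsWithin_sign_eq_of_deriv_pos hderiv hone),
    self_mem_nhdsWithin] with c hsign hc
  rwa [sign_pos (sub_pos.mpr hc), sign_eq_one_iff] at hsign

/-- Lazarević's inequality `cosh x < (sinh x / x) ^ 3`. -/
lemma weightedPowerMean_zero_lt_sinh_div (hx : 0 < x) :
    weightedPowerMean 0 1 (cosh x) < sinh x / x :=
  weightedPowerMean_lt_sinh_div hx fun _ hc ↦ signFactor_zero_pos hc.1

lemma sinh_div_lt_weightedPowerMean_four_fifths (hx : 0 < x) :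
    sinh x / x < weightedPowerMean (4 / 5) 1 (cosh x) :=
  sinh_div_lt_weightedPowerMean hx fun _ hc ↦ signFactor_four_fifths_neg hc.1

lemma eventually_sinh_div_lt_weightedPowerMean (hr : 0 < r) :
    ∀ᶠ x in atTop, sinh x / x < weightedPowerMean r 1 (cosh x) := by
  filter_upwards [eventually_ge_atTop ((3 : ℝ) ^ r⁻¹)] with x hx
  have hx₀ : 0 < x := lt_of_lt_of_le (by positivity) hx
  calc sinh x / x < cosh x / x := div_lt_div_of_pos_right (sinh_lt_cosh x) hx₀
    _ ≤ cosh x / 3 ^ r⁻¹ := div_le_div_of_nonneg_left (cosh_pos x).le (by positivity) hx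
    _ = (1 / 3) ^ r⁻¹ * cosh x := by
        rw [one_div, inv_rpow (by norm_num), div_eq_inv_mul]
    _ ≤ weightedPowerMean r 1 (cosh x) :=
        rpow_inv_mul_le_weightedPowerMean hr zero_le_one (cosh_pos x).le

lemma eventually_weightedPowerMean_lt_sinh_div (hr : r < 4 / 5) :
    ∀ᶠ x in 𝓝[>] 0, weightedPowerMean r 1 (cosh x) < sinh x / x := by
  obtain ⟨C, hC, hpos⟩ := mem_nhdsGT_iff_exists_Ioo_subset.mp (eventually_signFactor_pos hr)
  have hcosh : ∀ᶠ x in 𝓝[>] (0 : ℝ), cosh x < C :=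
    nhdsWithin_le_nhds (continuous_cosh.continuousAt.eventually_lt_const (by rwa [cosh_zero]))
  filter_upwards [hcosh, self_mem_nhdsWithin] with x hxC hx
  exact weightedPowerMean_lt_sinh_div hx fun c hc ↦ hpos ⟨hc.1, hc.2.trans hxC⟩

lemma forall_weightedPowerMean_lt_sinh_div_iff :
    (∀ x ∈ Ioi (0 : ℝ), weightedPowerMean r 1 (cosh x) < sinh x / x) ↔ r ≤ 0 := by
  refine ⟨fun h ↦ ?_, fun hr x hx ↦ ?_⟩
  · by_contra! hr
    obtain ⟨x, hlt, hx⟩ :=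
      ((eventually_sinh_div_lt_weightedPowerMean hr).and (eventually_gt_atTop 0)).exists
    exact lt_asymm hlt (h x hx)
  · exact (monotone_weightedPowerMean one_pos (cosh_pos x) hr).trans_lt
      (weightedPowerMean_zero_lt_sinh_div hx)

lemma forall_sinh_div_lt_weightedPowerMean_iff :
    (∀ x ∈ Ioi (0 : ℝ), sinh x / x < weightedPowerMean r 1 (cosh x)) ↔ 4 / 5 ≤ r := by
  refine ⟨fun h ↦ ?_, fun hr x hx ↦ ?_⟩
  · by_contra! hr
    obtain ⟨x, hlt, hx⟩ :=
      ((eventually_weightedPowerMean_lt_sinh_div hr).and self_mem_nhdsWithin).exists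
    exact lt_asymm hlt (h x hx)
  · exact (sinh_div_lt_weightedPowerMean_four_fifths hx).trans_le
      (monotone_weightedPowerMean one_pos (cosh_pos x) hr)

end SinhComparison

theorem powerMean_sinh_bounds (α β : ℝ) :
    (∀ x ∈ Ioi (0 : ℝ),
        weightedPowerMean α 1 (cosh x) < sinh x / x ∧
          sinh x / x < weightedPowerMean β 1 (cosh x)) ↔
      (α ≤ 0 ∧ β ≥ 4 / 5) :=
  forall₂_and.trans
    (and_congr forall_weightedPowerMean_lt_sinh_div_iff forall_sinh_div_lt_weightedPowerMean_iff)
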